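/- Let χ₁ and χ₂ be characters of ℰ(X). Suppose there is α ∈ 𝕊_X such that χ₁(u) = χ₂(u) = u(α) for all u ∈ C(X̄), and that χ₁ = χ₂ on the subalgebra ℰ(X/[α]). Then χ₁ = χ₂ on all of ℰ(X). -/

import Mathlib

open Filter Topology Set MeasureTheory Bornology BoundedContinuousFunction

noncomputable section

section ConeDefs
variable {X : Type*} [SeminormedAddCommGroup X] [Module ℝ X]

/-- A cone: a set stable under multiplication by positive scalars. -/
def IsCone (D : Set X) : Prop := ∀ x ∈ D, ∀ r : ℝ, 0 < r → r • x ∈ D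

/-- A truncated cone: the intersection of a cone with the complement of a bounded set. -/
def IsTruncCone (C : Set X) : Prop :=
  ∃ D B : Set X, IsCone D ∧ Bornology.IsBounded B ∧ C = D ∩ Bᶜ

/-- The half-line through `a` is eventually in `C`. -/
def EvIn (a : X) (C : Set X) : Prop :=
  ∃ s : ℝ, 0 < s ∧ ∀ r : ℝ, 1 ≤ r → r • (s • a) ∈ C

/-- The filter of truncated-cone neighborhoods of the direction of `a`. -/
def coneFilter (a : X) : Filter X :=
  Filter.generate {C | IsOpen C ∧ IsTruncCone C ∧ EvIn a C}

/-- The half-line `α` is eventually in `C`. -/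
def RayEvIn (α : Module.Ray ℝ X) (C : Set X) : Prop :=
  ∃ (a : X) (ha : a ≠ 0), rayOfNeZero ℝ a ha = α ∧ ∀ r : ℝ, 1 ≤ r → r • a ∈ C

/-- The filter of truncated-cone neighborhoods of the half-line `α`. -/
def rayConeFilter (α : Module.Ray ℝ X) : Filter X :=
  Filter.generate {C | IsOpen C ∧ IsTruncCone C ∧ RayEvIn α C}

end ConeDefs

instance instRayVectorTop {X : Type*} [SeminormedAddCommGroup X] [Module ℝ X] :
    TopologicalSpace (RayVector ℝ X) :=
  inferInstanceAs (TopologicalSpace {v : X // v ≠ 0})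

/-- The sphere at infinity with the quotient topology from `X ∖ {0}`. -/
instance instSphereTop {X : Type*} [SeminormedAddCommGroup X] [Module ℝ X] :
    TopologicalSpace (Module.Ray ℝ X) :=
  inferInstanceAs (TopologicalSpace (Quotient (RayVector.Setoid ℝ X)))

/-- The spherical compactification `X̄ = X ⊔ 𝕊_X`. -/
def SphComp (X : Type*) [SeminormedAddCommGroup X] [Module ℝ X] : Type _ :=
  X ⊕ Module.Ray ℝ X

instance instSphCompTop {X : Type*} [SeminormedAddCommGroup X] [Module ℝ X] :
    TopologicalSpace (SphComp X) :=
  TopologicalSpace.generateFrom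
    ({s | ∃ O : Set X, IsOpen O ∧ s = Sum.inl '' O} ∪
     {s | ∃ C : Set X, IsOpen C ∧ IsTruncCone C ∧
          s = Sum.inl '' C ∪ Sum.inr '' {α : Module.Ray ℝ X | RayEvIn α C}})


section Algebras
variable (X : Type*) [NormedAddCommGroup X] [NormedSpace ℝ X]

/-- Generators `u ∘ π_Z`, `u ∈ C(overline{X/Z})`, over all subspaces `Z ⊇ Y`. -/
def QGenSet (Y : Submodule ℝ X) : Set (X →ᵇ ℂ) :=
  {u | ∃ Z : Submodule ℝ X, Y ≤ Z ∧ ∃ v : C(SphComp (X ⧸ Z), ℂ),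
      ∀ x : X, u x = v (Sum.inl (Submodule.Quotient.mk x))}

/-- The C*-algebra `ℰ(X/Y)`, realized inside the bounded continuous functions on `X`. -/
def EAlgY (Y : Submodule ℝ X) : StarSubalgebra ℂ (X →ᵇ ℂ) :=
  (StarAlgebra.adjoin ℂ (QGenSet X Y)).topologicalClosure

/-- The C*-algebra `ℰ(X)` of elementary interactions. -/
abbrev EAlg : StarSubalgebra ℂ (X →ᵇ ℂ) := EAlgY X ⊥

end Algebras

section Aux
variable {Y : Type*} [SeminormedAddCommGroup Y] [NormedSpace ℝ Y]

def sinl (x : Y) : SphComp Y := Sum.inl x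
def sinr (β : Module.Ray ℝ Y) : SphComp Y := Sum.inr β

theorem isOpen_cone (C : Set Y) (hC : IsOpen C) (hC' : IsTruncCone C) :
    @IsOpen (SphComp Y) _ (Sum.inl '' C ∪ Sum.inr '' {α : Module.Ray ℝ Y | RayEvIn α C}) :=
  TopologicalSpace.isOpen_generateFrom_of_mem (Or.inr ⟨C, hC, hC', rfl⟩)

theorem isOpen_inl (O : Set Y) (hO : IsOpen O) :
    @IsOpen (SphComp Y) _ (Sum.inl '' O) :=
  TopologicalSpace.isOpen_generateFrom_of_mem (Or.inl ⟨O, hO, rfl⟩)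

theorem aux_tendsto {ι : Type*} {F : Filter ι} (f : ι → Y) (t : ι → ℝ) (b : Y) (hb : b ≠ 0)
    (hb' : ‖b‖ ≠ 0) (htp : ∀ i, 0 < t i) (ht : Tendsto t F (𝓝 0))
    (htf : Tendsto (fun i => t i • f i) F (𝓝 b)) :
    Tendsto (fun i => sinl (f i)) F
      (𝓝 (sinr (rayOfNeZero ℝ b hb))) := by
  refine TopologicalSpace.tendsto_nhds_generateFrom_iff.2 ?_
  rintro s (⟨O, hO, rfl⟩ | ⟨C, hC, ⟨D, B, hD, hB, rfl⟩, rfl⟩) hs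
  · obtain ⟨x, hx, h⟩ := hs
    exact absurd h (by rintro ⟨⟩)
  · have hr : RayEvIn (rayOfNeZero ℝ b hb) (D ∩ Bᶜ) := by
      rcases hs with ⟨x, hx, h⟩ | ⟨x, hx, h⟩
      · exact absurd h (by rintro ⟨⟩)
      · cases h; exact hx
    obtain ⟨c, hc, hcb, hcC⟩ := hr
    obtain ⟨r₁, r₂, h₁, h₂, h⟩ := ((ray_eq_iff hc hb).1 hcb).exists_pos hc hb
    have hcb' : c = (r₁⁻¹ * r₂) • b := by
      rw [mul_smul, ← h, smul_smul, inv_mul_cancel₀ h₁.ne', one_smul]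
    have hk : 0 < r₁⁻¹ * r₂ := by positivity
    set k := r₁⁻¹ * r₂
    have hcC1 := hcC 1 le_rfl
    rw [one_smul, hcb'] at hcC1
    have e1 : ∀ᶠ i in F, k • (t i • f i) ∈ D ∩ Bᶜ :=
      (htf.const_smul k).eventually (hC.mem_nhds hcC1)
    have e2 : Tendsto (fun i => (t i)⁻¹ * ‖t i • f i‖) F atTop := by
      refine Tendsto.atTop_mul_pos (lt_of_le_of_ne (norm_nonneg b) hb'.symm) ?_ htf.norm
      refine Tendsto.comp tendsto_inv_nhdsGT_zero ?_
      exact tendsto_nhdsWithin_iff.2 ⟨ht, Eventually.of_forall htp⟩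
    obtain ⟨R, hR⟩ := hB.exists_norm_le
    filter_upwards [e1, e2.eventually_gt_atTop R] with i hi1 hi2
    left
    refine ⟨f i, ⟨?_, ?_⟩, rfl⟩
    · have := hD _ hi1.1 (k⁻¹ * (t i)⁻¹) (by have := htp i; positivity)
      rw [smul_smul, smul_smul] at this
      have h1 : k⁻¹ * (t i)⁻¹ * k * t i = 1 := by
        have := (htp i).ne'
        have := hk.ne'
        field_simp
      rwa [h1, one_smul] at this
    · intro hB
      have := hR _ hB
      rw [norm_smul, Real.norm_of_nonneg (htp i).le, ← mul_assoc,
        inv_mul_cancel₀ (htp i).ne', one_mul] at hi2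
      linarith

def hfun (a x : Y) : ℝ := ‖‖a‖ • x - ‖x‖ • a‖

theorem hfun_smul (a x : Y) (r : ℝ) (hr : 0 < r) : hfun a (r • x) = r * hfun a x := by
  unfold hfun
  rw [norm_smul, Real.norm_of_nonneg hr.le, mul_smul, smul_comm, ← smul_sub, norm_smul,
    Real.norm_of_nonneg hr.le]

theorem hfun_le (a x : Y) : hfun a x ≤ 2 * ‖a‖ * ‖x‖ := by
  unfold hfun
  refine (norm_sub_le _ _).trans ?_
  rw [norm_smul, norm_smul, norm_norm, norm_norm]
  nlinarith

theorem hfun_nonneg (a x : Y) : 0 ≤ hfun a x := norm_nonneg _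

theorem hfun_cont (a : Y) : Continuous (hfun a) := by
  unfold hfun; fun_prop

def dfun (a : Y) : SphComp Y → ℝ :=
  Sum.elim (fun x => (hfun a x + 1) / (1 + ‖x‖))
    (fun β => hfun a β.someVector / ‖β.someVector‖)

theorem dfun_inl (a x : Y) :
    dfun a (sinl x) = (hfun a x + 1) / (1 + ‖x‖) := rfl

theorem hquot_smul (a x : Y) (r : ℝ) (hr : 0 < r) :
    hfun a (r • x) / ‖r • x‖ = hfun a x / ‖x‖ := by
  rw [hfun_smul _ _ _ hr, norm_smul, Real.norm_of_nonneg hr.le, mul_div_mul_left _ _ hr.ne']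

theorem dfun_inr (a b : Y) (hb : b ≠ 0) :
    dfun a (sinr (rayOfNeZero ℝ b hb)) = hfun a b / ‖b‖ := by
  have h0 := (rayOfNeZero ℝ b hb).someVector_ray
  set c := (rayOfNeZero ℝ b hb).someVector with hcdef
  have hc : c ≠ 0 := (rayOfNeZero ℝ b hb).someVector_ne_zero
  obtain ⟨r₁, r₂, h₁, h₂, h⟩ := ((ray_eq_iff hc hb).1 h0).exists_pos hc hb
  change hfun a c / ‖c‖ = _
  rw [← hquot_smul a c r₁ h₁, h, hquot_smul a b r₂ h₂]

theorem dfun_cont (hn : ∀ x : Y, ‖x‖ = 0 → x = 0) (a : Y) : Continuous (dfun a) := by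
  rw [continuous_iff_continuousAt]
  rintro (x | β)
  · have h1 : 𝓝 (sinl x) ≤ map (fun y => (sinl y)) (𝓝 x) := by
      intro U hU
      obtain ⟨O, hOU, hO, hx⟩ := mem_nhds_iff.1 (mem_map.1 hU)
      refine mem_of_superset (IsOpen.mem_nhds
        (isOpen_inl O hO)
        (show (sinl x) ∈ _ from ⟨x, hx, rfl⟩)) ?_
      rintro _ ⟨y, hy, rfl⟩
      exact hOU hy
    refine Tendsto.mono_left ?_ h1
    rw [tendsto_map'_iff]
    have : Continuous (fun y : Y => (hfun a y + 1) / (1 + ‖y‖)) := by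
      refine Continuous.div ((hfun_cont a).add continuous_const) (by fun_prop) ?_
      intro y; positivity
    exact this.tendsto x
  · induction β using Module.Ray.ind with
    | h b hb =>
    have hbn : 0 < ‖b‖ := lt_of_le_of_ne (norm_nonneg b) fun h => hb (hn b h.symm)
    refine Metric.tendsto_nhds.2 ?_
    intro ε hε
    change ∀ᶠ y in 𝓝 (sinr (rayOfNeZero ℝ b hb)), dist (dfun a y) (dfun a (sinr (rayOfNeZero ℝ b hb))) < ε
    rw [dfun_inr]
    set L := hfun a b / ‖b‖ with hL
    set R : ℝ := (1 + 2 * ‖a‖) / (ε / 2) with hR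
    have hRp : 0 < R := by positivity
    set D : Set Y := {x | ‖x‖ ≠ 0 ∧ |hfun a x / ‖x‖ - L| < ε / 2} with hDdef
    have hD : IsCone D := by
      rintro x ⟨hx, hx2⟩ r hr
      refine ⟨by rw [norm_smul, Real.norm_of_nonneg hr.le]; exact mul_ne_zero hr.ne' hx, ?_⟩
      rw [hquot_smul _ _ _ hr]; exact hx2
    have hDo : IsOpen D := by
      have hU : IsOpen {x : Y | ‖x‖ ≠ 0} := isOpen_ne_fun continuous_norm continuous_const
      have hc : ContinuousOn (fun x : Y => |hfun a x / ‖x‖ - L|) {x : Y | ‖x‖ ≠ 0} := by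
        refine ContinuousOn.abs (ContinuousOn.sub ?_ continuousOn_const)
        exact (hfun_cont a).continuousOn.div continuous_norm.continuousOn fun x hx => hx
      exact hc.isOpen_inter_preimage hU isOpen_Iio
    have hCo : IsOpen (D ∩ (Metric.closedBall (0:Y) R)ᶜ) :=
      hDo.inter Metric.isClosed_closedBall.isOpen_compl
    have hmem : (sinr (rayOfNeZero ℝ b hb)) ∈
        (Sum.inl '' (D ∩ (Metric.closedBall (0:Y) R)ᶜ) ∪
        Sum.inr '' {α : Module.Ray ℝ Y | RayEvIn α (D ∩ (Metric.closedBall (0:Y) R)ᶜ)}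
          : Set (SphComp Y)) := by
      right
      refine ⟨_, ?_, rfl⟩
      have hk : 0 < (R + 1) / ‖b‖ := by positivity
      refine ⟨((R + 1) / ‖b‖) • b, smul_ne_zero hk.ne' hb, ?_, ?_⟩
      · exact (ray_eq_iff _ _).2 (SameRay.sameRay_pos_smul_left b hk)
      · intro r hr
        have hr0 : 0 < r := by linarith
        have hbD : b ∈ D := ⟨hbn.ne', by simp [hL, hε]⟩
        refine ⟨hD _ (hD _ hbD _ hk) _ hr0, ?_⟩
        simp only [mem_compl_iff, Metric.mem_closedBall, dist_zero_right, not_le]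
        rw [norm_smul, norm_smul, Real.norm_of_nonneg hr0.le, Real.norm_of_nonneg hk.le,
          div_mul_cancel₀ _ hbn.ne']
        nlinarith
    refine mem_of_superset (IsOpen.mem_nhds
      (isOpen_cone _ hCo ⟨D, _, hD, Metric.isBounded_closedBall, rfl⟩) hmem) ?_
    rintro _ (⟨x, ⟨⟨hx0, hx1⟩, hx2⟩, rfl⟩ | ⟨β, ⟨c, hc, rfl, hcC⟩, rfl⟩)
    · change dist (dfun a (sinl x)) L < ε
      rw [dfun_inl, Real.dist_eq]
      simp only [mem_compl_iff, Metric.mem_closedBall, dist_zero_right, not_le] at hx2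
      have hxp : 0 < ‖x‖ := lt_trans hRp hx2
      have h1 : |(hfun a x + 1) / (1 + ‖x‖) - hfun a x / ‖x‖| ≤ ε / 2 := by
        have e : (hfun a x + 1) / (1 + ‖x‖) - hfun a x / ‖x‖
            = (‖x‖ - hfun a x) / (‖x‖ * (1 + ‖x‖)) := by
          field_simp
          ring
        rw [e, abs_div, abs_of_pos (by positivity : 0 < ‖x‖ * (1 + ‖x‖)),
          div_le_iff₀ (by positivity)]
        have h2 : |‖x‖ - hfun a x| ≤ (1 + 2 * ‖a‖) * ‖x‖ := by
          have := hfun_le a x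
          have := hfun_nonneg a x
          have := mul_nonneg (norm_nonneg a) (norm_nonneg x)
          rw [abs_le]; constructor <;> nlinarith
        have h3 : 1 + 2 * ‖a‖ < ‖x‖ * (ε / 2) := by
          rw [hR, div_lt_iff₀ (by positivity)] at hx2
          exact hx2
        nlinarith
      have := abs_sub_le ((hfun a x + 1) / (1 + ‖x‖)) (hfun a x / ‖x‖) L
      linarith
    · change dist (dfun a (sinr (rayOfNeZero ℝ c hc))) L < ε
      have := (hcC 1 le_rfl).1.2
      rw [one_smul] at this
      rw [dfun_inr, Real.dist_eq]
      linarith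

/-- the filter on `X` of approach to the half-line of `a` -/
theorem dfun_filter (a : Y) (ha : ‖a‖ ≠ 0) :
    Tendsto (fun x : Y => (1 + ‖x‖)⁻¹) (comap (fun x => dfun a (sinl x)) (𝓝 0)) (𝓝 0) ∧
    Tendsto (fun x : Y => (1 + ‖x‖)⁻¹ • x) (comap (fun x => dfun a (sinl x)) (𝓝 0))
      (𝓝 (‖a‖⁻¹ • a)) := by
  have h0 : Tendsto (fun x => dfun a (sinl x))
    (comap (fun x => dfun a (sinl x)) (𝓝 0)) (𝓝 0) := tendsto_comap
  have h1 : Tendsto (fun x : Y => (1 + ‖x‖)⁻¹)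
      (comap (fun x => dfun a (sinl x)) (𝓝 0)) (𝓝 0) := by
    refine squeeze_zero (fun x => by positivity) (fun x => ?_) h0
    rw [dfun_inl, inv_eq_one_div]
    gcongr
    linarith [hfun_nonneg a x]
  refine ⟨h1, ?_⟩
  have h2 : Tendsto (fun x : Y => (1 + ‖x‖)⁻¹ • (‖a‖ • x - ‖x‖ • a))
      (comap (fun x => dfun a (sinl x)) (𝓝 0)) (𝓝 0) := by
    refine squeeze_zero_norm (fun x => ?_) h0
    rw [dfun_inl, norm_smul, Real.norm_of_nonneg (by positivity), inv_mul_eq_div]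
    gcongr
    exact (le_add_of_nonneg_right zero_le_one : hfun a x ≤ _)
  have h3 := (h2.const_smul ‖a‖⁻¹).add ((tendsto_const_nhds (x := (1:ℝ))).sub h1 |>.smul_const (‖a‖⁻¹ • a))
  simp only [smul_zero, sub_zero, one_smul, zero_add] at h3
  refine h3.congr fun x => ?_
  have hx : (1 + ‖x‖) ≠ 0 := by positivity
  have : 1 - (1 + ‖x‖)⁻¹ = (1 + ‖x‖)⁻¹ * ‖x‖ := by field_simp; ring
  rw [this, smul_sub, smul_sub]
  simp only [smul_smul]
  rw [show ‖a‖⁻¹ * ((1 + ‖x‖)⁻¹ * ‖a‖) = (1 + ‖x‖)⁻¹ by field_simp]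
  rw [show ‖a‖⁻¹ * ((1 + ‖x‖)⁻¹ * ‖x‖) = (1 + ‖x‖)⁻¹ * ‖x‖ * ‖a‖⁻¹ by ring]
  abel

end Aux

section Aux2
variable {Y : Type*} [SeminormedAddCommGroup Y] [NormedSpace ℝ Y]

theorem dfun_nonneg (a : Y) (p : SphComp Y) : 0 ≤ dfun a p := by
  rcases p with x | β
  · exact div_nonneg (by linarith [hfun_nonneg a x]) (by positivity)
  · exact div_nonneg (hfun_nonneg a _) (norm_nonneg _)

def wfun (hn : ∀ x : Y, ‖x‖ = 0 → x = 0) (a : Y) (δ : ℝ) : C(SphComp Y, ℂ) where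
  toFun p := ((max 0 (1 - dfun a p / δ) : ℝ) : ℂ)
  continuous_toFun := Complex.continuous_ofReal.comp
    (continuous_const.max (continuous_const.sub ((dfun_cont hn a).div_const δ)))

end Aux2

section Aux3
variable {X : Type*} [NormedAddCommGroup X] [NormedSpace ℝ X]

theorem norm_mk_bot (x : X) : ‖(Submodule.Quotient.mk x : X ⧸ (⊥ : Submodule ℝ X))‖ = ‖x‖ := by
  have h : ‖(Submodule.Quotient.mk x : X ⧸ (⊥ : Submodule ℝ X))‖
      = Metric.infDist x (((⊥ : Submodule ℝ X).toAddSubgroup : AddSubgroup X) : Set X) :=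
    QuotientAddGroup.norm_mk (S := (⊥ : Submodule ℝ X).toAddSubgroup) x
  rw [h]
  simp

theorem hfun_mk_bot (a x : X) :
    hfun (Submodule.Quotient.mk a : X ⧸ (⊥ : Submodule ℝ X)) (Submodule.Quotient.mk x) =
      hfun a x := by
  unfold hfun
  rw [norm_mk_bot, norm_mk_bot, ← Submodule.Quotient.mk_smul, ← Submodule.Quotient.mk_smul,
    ← Submodule.Quotient.mk_sub, norm_mk_bot]

theorem dfun_mk_bot (a x : X) :
    dfun (Submodule.Quotient.mk a : X ⧸ (⊥ : Submodule ℝ X)) (sinl (Submodule.Quotient.mk x)) =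
      dfun a (sinl x) := by
  rw [dfun_inl, dfun_inl, norm_mk_bot, hfun_mk_bot]

theorem mk_bot_sep (x : X ⧸ (⊥ : Submodule ℝ X)) (h : ‖x‖ = 0) : x = 0 := by
  induction x using Submodule.Quotient.induction_on with
  | H x =>
    rw [norm_mk_bot, norm_eq_zero] at h
    rw [h]; rfl

theorem continuous_sinl : Continuous (sinl : X → SphComp X) := by
  refine continuous_generateFrom_iff.2 ?_
  rintro s (⟨O, hO, rfl⟩ | ⟨C, hC, -, rfl⟩)
  · convert hO using 1
    ext x
    constructor
    · rintro ⟨y, hy, h⟩; cases h; exact hy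
    · intro h; exact ⟨x, h, rfl⟩
  · convert hC using 1
    ext x
    constructor
    · rintro (⟨y, hy, h⟩ | ⟨y, hy, h⟩)
      · cases h; exact hy
      · exact absurd h (by rintro ⟨⟩)
    · intro h; exact Or.inl ⟨x, h, rfl⟩

theorem norm_wfun_le (hn : ∀ x : X, ‖x‖ = 0 → x = 0) (a : X) (δ : ℝ) (hδ : 0 < δ)
    (p : SphComp X) : ‖wfun hn a δ p‖ ≤ 1 := by
  change ‖((max 0 (1 - dfun a p / δ) : ℝ) : ℂ)‖ ≤ 1
  rw [Complex.norm_real, Real.norm_of_nonneg (le_max_left _ _)]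
  have := div_nonneg (dfun_nonneg a p) hδ.le
  exact max_le zero_le_one (by linarith)

def wbcf (a : X) (δ : ℝ) (hδ : 0 < δ) : X →ᵇ ℂ :=
  BoundedContinuousFunction.ofNormedAddCommGroup
    (fun x => wfun (fun _ => norm_eq_zero.1) a δ (sinl x))
    ((ContinuousMap.continuous _).comp continuous_sinl) 1
    (fun _ => norm_wfun_le _ a δ hδ _)

theorem wbcf_mem (a : X) (δ : ℝ) (hδ : 0 < δ) : wbcf a δ hδ ∈ EAlg X := by
  refine StarSubalgebra.le_topologicalClosure _ (StarAlgebra.subset_adjoin ℂ _ ?_)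
  refine ⟨⊥, le_rfl, wfun mk_bot_sep (Submodule.Quotient.mk a) δ, fun x => ?_⟩
  change ((max 0 (1 - dfun a (sinl x) / δ) : ℝ) : ℂ) =
    ((max 0 (1 - dfun (Submodule.Quotient.mk a : X ⧸ (⊥ : Submodule ℝ X))
      (sinl (Submodule.Quotient.mk x)) / δ) : ℝ) : ℂ)
  rw [dfun_mk_bot]

instance completeEAlgY (Y : Submodule ℝ X) : CompleteSpace (EAlgY X Y) :=
  (StarSubalgebra.isClosed_topologicalClosure (StarAlgebra.adjoin ℂ (QGenSet X Y))).completeSpace_coe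

theorem char_norm_le (χ : (EAlg X) →⋆ₐ[ℂ] ℂ) (u : EAlg X) : ‖χ u‖ ≤ ‖u‖ :=
  AlgHom.norm_apply_le_self χ.toAlgHom u

theorem char_eq (a : X) (ha : a ≠ 0) (χ : (EAlg X) →⋆ₐ[ℂ] ℂ)
    (hrestr : ∀ (v : C(SphComp X, ℂ)) (u : EAlg X),
      (∀ x : X, (u : X →ᵇ ℂ) x = v (Sum.inl x)) →
        χ u = v (Sum.inr (rayOfNeZero ℝ a ha)))
    (u : EAlg X) (c : ℂ)
    (hu : Tendsto (fun x => (u : X →ᵇ ℂ) x) (comap (fun x => dfun a (sinl x)) (𝓝 0)) (𝓝 c)) :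
    χ u = c := by
  rw [← sub_eq_zero, ← norm_le_zero_iff]
  refine le_of_forall_pos_le_add fun ε hε => ?_
  rw [zero_add]
  obtain ⟨δ, hδ, hδ'⟩ := ((Metric.nhds_basis_ball.comap _).eventually_iff).1
    (hu.eventually (Metric.closedBall_mem_nhds c hε))
  set w : EAlg X := ⟨wbcf a δ hδ, wbcf_mem a δ hδ⟩ with hw
  have hχw : χ w = 1 := by
    rw [hrestr (wfun (fun _ => norm_eq_zero.1) a δ) w (fun x => rfl)]
    change ((max 0 (1 - dfun a (sinr (rayOfNeZero ℝ a ha)) / δ) : ℝ) : ℂ) = 1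
    rw [dfun_inr]
    simp [hfun]
  have h1 : χ ((u - algebraMap ℂ _ c) * w) = χ u - c := by
    rw [map_mul, hχw, mul_one, map_sub, AlgHomClass.commutes]; rfl
  rw [← h1]
  refine (char_norm_le _ _).trans ?_
  change ‖(((u - algebraMap ℂ _ c) * w : EAlg X) : X →ᵇ ℂ)‖ ≤ ε
  refine (BoundedContinuousFunction.norm_le hε.le).2 fun x => ?_
  have he : (algebraMap ℂ (X →ᵇ ℂ) c) x = c := by
    rw [Algebra.algebraMap_eq_smul_one]; simp
  change ‖((u : X →ᵇ ℂ) x - (algebraMap ℂ (X →ᵇ ℂ) c) x) * ((max 0 (1 - dfun a (sinl x) / δ) : ℝ) : ℂ)‖ ≤ ε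
  rw [he, norm_mul]
  by_cases hx : dfun a (sinl x) < δ
  · have h2 : ‖(u : X →ᵇ ℂ) x - c‖ ≤ ε := by
      have := @hδ' x (by simpa [abs_of_nonneg (dfun_nonneg a _)] using hx)
      simpa [dist_eq_norm] using this
    have h3 := norm_wfun_le (fun _ => norm_eq_zero.1) a δ hδ (sinl x)
    calc _ ≤ ε * 1 := mul_le_mul h2 h3 (norm_nonneg _) hε.le
      _ = ε := mul_one _
  · have : max 0 (1 - dfun a (sinl x) / δ) = 0 := by
      refine max_eq_left ?_
      rw [sub_nonpos, one_le_div hδ]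
      exact not_lt.1 hx
    rw [this]
    simp [hε.le]

end Aux3

/-- two characters of `ℰ(X)` that both restrict to the character
`χ_α` on `C(X̄)` and agree on `ℰ(X/[α])` are equal. -/
theorem statement16 {X : Type*} [NormedAddCommGroup X] [NormedSpace ℝ X]
    [FiniteDimensional ℝ X] (a : X) (ha : a ≠ 0)
    (χ₁ χ₂ : (EAlg X) →⋆ₐ[ℂ] ℂ)
    (hrestr : ∀ (v : C(SphComp X, ℂ)) (u : EAlg X),
      (∀ x : X, (u : X →ᵇ ℂ) x = v (Sum.inl x)) →
        χ₁ u = v (Sum.inr (rayOfNeZero ℝ a ha)) ∧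
        χ₂ u = v (Sum.inr (rayOfNeZero ℝ a ha)))
    (hagree : ∀ u : EAlg X, (u : X →ᵇ ℂ) ∈ EAlgY X (Submodule.span ℝ {a}) →
        χ₁ u = χ₂ u) :
    χ₁ = χ₂ := by
  have cont : ∀ χ : (EAlg X) →⋆ₐ[ℂ] ℂ, Continuous χ := fun χ =>
    AddMonoidHomClass.continuous_of_bound χ 1 (fun u => by
      rw [one_mul]; exact char_norm_le χ u)
  refine StarAlgHom.ext_topologicalClosure (cont χ₁) (cont χ₂) ?_
  refine StarAlgHom.ext_adjoin ?_
  rintro ⟨u, hu⟩ hux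
  obtain ⟨Z, -, v, hv⟩ := id hux
  change χ₁ ⟨u, _⟩ = χ₂ ⟨u, _⟩
  by_cases haZ : a ∈ Z
  · refine hagree _ ?_
    refine StarSubalgebra.le_topologicalClosure _ (StarAlgebra.subset_adjoin ℂ _ ?_)
    exact ⟨Z, by simpa using haZ, v, hv⟩
  · have han : 0 < ‖a‖ := norm_pos_iff.2 ha
    obtain ⟨h1, h2⟩ := dfun_filter a han.ne'
    have hmk : Continuous (fun x : X => (Submodule.Quotient.mk x : X ⧸ Z)) :=
      continuous_quot_mk
    have h3 := (hmk.tendsto _).comp h2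
    have hb0 : ‖(Submodule.Quotient.mk (‖a‖⁻¹ • a) : X ⧸ Z)‖ ≠ 0 := by
      have hcl : IsClosed (Z.toAddSubgroup : Set X) := Z.closed_of_finiteDimensional
      intro h
      have := (QuotientAddGroup.norm_mk_eq_zero (S := Z.toAddSubgroup)).1 h
      exact haZ ((Z.smul_mem_iff (inv_ne_zero han.ne')).1 this)
    have hb : (Submodule.Quotient.mk (‖a‖⁻¹ • a) : X ⧸ Z) ≠ 0 := by
      intro h; rw [h] at hb0; exact hb0 norm_zero
    have h4 := aux_tendsto (fun x : X => (Submodule.Quotient.mk x : X ⧸ Z))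
      (fun x => (1 + ‖x‖)⁻¹) _ hb hb0 (fun x => by positivity) h1 h3
    have h5 : Tendsto (fun x => u x) (comap (fun x => dfun a (sinl x)) (𝓝 0)) _ :=
      ((v.continuous.tendsto _).comp h4).congr fun x => (hv x).symm
    rw [char_eq a ha χ₁ (fun v u h => (hrestr v u h).1) _ _ h5,
      char_eq a ha χ₂ (fun v u h => (hrestr v u h).2) _ _ h5]
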